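/- (Conditional decomposition underlying Proposition 1.) Suppose Assumption DID holds for each path d in {(1,1),(0,1),(1,0)} relative to d' = (0,0), and P(D = e | X) > 0 a.s. for every e in {0,1}^2. Then, a.s., E[ΔY | D2 = 1, X] − E[ΔY | D2 = 0, X] = E[Y2(1,1) − Y2(0,0) | D = (1,1), X] · P(D1 = 1 | D2 = 1, X) + E[Y2(0,1) − Y2(0,0) | D = (0,1), X] · P(D1 = 0 | D2 = 1, X) − E[Y2(1,0) − Y2(0,0) | D = (1,0), X] · P(D1 = 1 | D2 = 0, X). -/

import Mathlib

open MeasureTheory Set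
open scoped Classical

noncomputable section

namespace DIDMissing

variable {Ω : Type*} {𝓧 : Type*}

/-- Real-valued indicator of a set. -/
def ind (A : Set Ω) : Ω → ℝ := A.indicator fun _ => (1 : ℝ)

/-- All treatment paths `{0,1}²` (coded as reals). -/
def allPaths : Set (ℝ × ℝ) := {(0, 0), (0, 1), (1, 0), (1, 1)}

/-- The three treated paths `{(1,1), (0,1), (1,0)}`. -/
def threePaths : Set (ℝ × ℝ) := {(1, 1), (0, 1), (1, 0)}

/-- The event `{D = d}` for a treatment path `d = (d₁, d₂)`. -/
def evD (D1 D2 : Ω → ℝ) (d : ℝ × ℝ) : Set Ω := {ω | D1 ω = d.1 ∧ D2 ω = d.2}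

/-- The event `{D₂ = b}`. -/
def evD2 (D2 : Ω → ℝ) (b : ℝ) : Set Ω := {ω | D2 ω = b}

/-- `g` is a (measurable-in-the-covariate) version of the conditional mean `E[Z ∣ A, X]`:
for every bounded measurable `h`, `E[1_A · Z · h(X)] = E[1_A · g(X) · h(X)]`. -/
def IsCondMeanGiven [MeasurableSpace Ω] [MeasurableSpace 𝓧] (P : Measure Ω) (X : Ω → 𝓧)
    (A : Set Ω) (Z : Ω → ℝ) (g : 𝓧 → ℝ) : Prop :=
  Measurable g ∧
    ∀ h : 𝓧 → ℝ, Measurable h → (∃ C, ∀ x, |h x| ≤ C) →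
      ∫ ω, ind A ω * Z ω * h (X ω) ∂P = ∫ ω, ind A ω * g (X ω) * h (X ω) ∂P

/-- Assumption DID for a path `d` relative to `d' = (0,0)`:
(i) no anticipation, `E[Y₀(d) ∣ D = d, X] = E[Y₀(0,0) ∣ D = d, X]` a.s., stated in the
version-free integral form; and (ii) conditional parallel trends, stated as the existence
of a common version of `E[Y₂(0,0) − Y₀(0,0) ∣ X]` and `E[Y₂(0,0) − Y₀(0,0) ∣ D = d, X]`. -/
def DID [MeasurableSpace Ω] [MeasurableSpace 𝓧] (P : Measure Ω) (X : Ω → 𝓧)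
    (D1 D2 : Ω → ℝ) (Y0p Y2p : ℝ × ℝ → Ω → ℝ) (d : ℝ × ℝ) : Prop :=
  (∀ h : 𝓧 → ℝ, Measurable h → (∃ C, ∀ x, |h x| ≤ C) →
      ∫ ω, ind (evD D1 D2 d) ω * Y0p d ω * h (X ω) ∂P
        = ∫ ω, ind (evD D1 D2 d) ω * Y0p (0, 0) ω * h (X ω) ∂P) ∧
  (∃ tr : 𝓧 → ℝ,
      IsCondMeanGiven P X Set.univ (fun ω => Y2p (0, 0) ω - Y0p (0, 0) ω) tr ∧
      IsCondMeanGiven P X (evD D1 D2 d) (fun ω => Y2p (0, 0) ω - Y0p (0, 0) ω) tr)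

/-- Assumption MAR: `S ⟂ (D₁, ΔY) ∣ (D₂, X)`, where `q d₂` is a version of the
missing-data probability `P(S = 1 ∣ D₂ = d₂, X)`, which is `(0,1]`-valued a.s. -/
def MAR [MeasurableSpace Ω] [MeasurableSpace 𝓧] (P : Measure Ω) (X : Ω → 𝓧)
    (D1 D2 S Y0 Y2 : Ω → ℝ) (q : ℝ → 𝓧 → ℝ) : Prop :=
  (∀ d2 ∈ ({0, 1} : Set ℝ), IsCondMeanGiven P X (evD2 D2 d2) S (q d2)) ∧
  (∀ d2 ∈ ({0, 1} : Set ℝ), ∀ᵐ ω ∂P, 0 < q d2 (X ω) ∧ q d2 (X ω) ≤ 1) ∧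
  (∀ d2 ∈ ({0, 1} : Set ℝ), ∀ f : ℝ × ℝ → ℝ, Measurable f → (∃ C, ∀ p, |f p| ≤ C) →
      ∀ h : 𝓧 → ℝ, Measurable h → (∃ C, ∀ x, |h x| ≤ C) →
        ∫ ω, ind (evD2 D2 d2) ω * S ω * f (D1 ω, Y2 ω - Y0 ω) * h (X ω) ∂P
          = ∫ ω, ind (evD2 D2 d2) ω * q d2 (X ω) * f (D1 ω, Y2 ω - Y0 ω) * h (X ω) ∂P)

/-- The path-dependent ATT `τ_{d,(0,0)} = E[Y₂(d) − Y₂(0,0) ∣ D = d]`. -/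
def tau [MeasurableSpace Ω] (P : Measure Ω) (D1 D2 : Ω → ℝ)
    (Y2p : ℝ × ℝ → Ω → ℝ) (d : ℝ × ℝ) : ℝ :=
  (P (evD D1 D2 d)).toReal⁻¹ * ∫ ω in evD D1 D2 d, (Y2p d ω - Y2p (0, 0) ω) ∂P

theorem aux_K [MeasurableSpace Ω] [m𝓧 : MeasurableSpace 𝓧]
    (P : Measure Ω) [IsProbabilityMeasure P]
    (X : Ω → 𝓧) (hX : Measurable X) (U V : Ω → ℝ) (hU : Integrable U P) (hV : Integrable V P)
    (H : ∀ h : 𝓧 → ℝ, Measurable h → (∃ C, ∀ x, |h x| ≤ C) →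
      ∫ ω, U ω * h (X ω) ∂P = ∫ ω, V ω * h (X ω) ∂P) :
    P[U | m𝓧.comap X] =ᵐ[P] P[V | m𝓧.comap X] := by
  have hm := hX.comap_le
  refine ae_eq_condExp_of_forall_setIntegral_eq hm hV
    (fun _ _ _ => integrable_condExp.integrableOn) ?_
    stronglyMeasurable_condExp.aestronglyMeasurable
  rintro s ⟨t, ht, rfl⟩ -
  rw [setIntegral_condExp hm hU ⟨t, ht, rfl⟩]
  have := H (t.indicator fun _ => (1 : ℝ)) (measurable_const.indicator ht)
    ⟨1, fun x => by by_cases hx : x ∈ t <;> simp [hx]⟩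
  rw [← integral_indicator (hX ht), ← integral_indicator (hX ht)]
  convert this using 2 <;>
  · ext ω
    by_cases hx : X ω ∈ t <;> simp [hx, Set.indicator]

theorem aux_ind_int [MeasurableSpace Ω] (P : Measure Ω) (A : Set Ω) (hA : MeasurableSet A)
    (Z : Ω → ℝ) (hZ : Integrable Z P) : Integrable (fun ω => ind A ω * Z ω) P := by
  have : (fun ω => ind A ω * Z ω) = A.indicator Z := by
    ext ω
    by_cases h : ω ∈ A <;> simp [ind, h]
  rw [this]
  exact hZ.indicator hA

theorem aux_L [MeasurableSpace Ω] [m𝓧 : MeasurableSpace 𝓧]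
    (P : Measure Ω) [IsProbabilityMeasure P]
    (X : Ω → 𝓧) (hX : Measurable X) (A : Set Ω) (hA : MeasurableSet A)
    (Z : Ω → ℝ) (hZ : Integrable Z P) (g : 𝓧 → ℝ) (H : IsCondMeanGiven P X A Z g) :
    P[fun ω => ind A ω * Z ω | m𝓧.comap X] =ᵐ[P]
      fun ω => (P[ind A | m𝓧.comap X]) ω * g (X ω) := by
  obtain ⟨hg, H⟩ := H
  have hm := hX.comap_le
  have hindm : Measurable (ind A : Ω → ℝ) := measurable_const.indicator hA
  have hindb : ∀ ω, |ind A ω| ≤ 1 := fun ω => by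
    by_cases h : ω ∈ A <;> simp [ind, h]
  have hind0 : ∀ ω, 0 ≤ ind A ω := fun ω => by
    by_cases h : ω ∈ A <;> simp [ind, h]
  have hindi : Integrable (ind A : Ω → ℝ) P := (integrable_const (1 : ℝ)).indicator hA
  have hZi := aux_ind_int P A hA Z hZ
  have hint : Integrable (fun ω => ind A ω * g (X ω)) P := by
    have hφm : ∀ n : ℕ, MeasurableSet {x : 𝓧 | |g x| ≤ n} := fun n =>
      measurableSet_le hg.abs measurable_const
    have hcov : AECover P Filter.atTop (fun n : ℕ => {ω | |g (X ω)| ≤ n}) := by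
      constructor
      · refine Filter.Eventually.of_forall fun ω => ?_
        obtain ⟨N, hN⟩ := exists_nat_ge |g (X ω)|
        filter_upwards [Filter.eventually_ge_atTop N] with n hn
        exact hN.trans (by exact_mod_cast hn)
      · exact fun n => hX (hφm n)
    refine hcov.integrable_of_integral_norm_bounded (∫ ω, |Z ω| ∂P) ?_ ?_
    · intro n
      refine Measure.integrableOn_of_bounded (M := n) (measure_ne_top _ _)
        (hindm.mul (hg.comp hX)).aestronglyMeasurable ?_
      refine (ae_restrict_mem (hX (hφm n))).mono fun ω hω => ?_
      have : |g (X ω)| ≤ n := hω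
      rw [norm_mul, Real.norm_eq_abs, Real.norm_eq_abs]
      have := hindb ω
      nlinarith [abs_nonneg (g (X ω))]
    · refine Filter.Eventually.of_forall fun n => ?_
      set h : 𝓧 → ℝ := {x : 𝓧 | |g x| ≤ n}.indicator (fun x => if 0 ≤ g x then 1 else -1) with hh
      have hhm : Measurable h := (Measurable.ite (measurableSet_le measurable_const hg)
        measurable_const measurable_const).indicator (hφm n)
      have hhb : ∀ x, |h x| ≤ 1 := fun x => by
        simp only [hh, Set.indicator]
        split_ifs <;> simp
      have e := H h hhm ⟨1, hhb⟩
      have e2 : ∫ ω in {ω | |g (X ω)| ≤ n}, ‖ind A ω * g (X ω)‖ ∂P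
          = ∫ ω, ind A ω * g (X ω) * h (X ω) ∂P := by
        rw [← integral_indicator (show MeasurableSet {ω | |g (X ω)| ≤ n} from hX (hφm n))]
        congr 1
        ext ω
        by_cases hx : |g (X ω)| ≤ n
        · simp only [hh, Set.indicator, Set.mem_setOf_eq, hx, if_true, norm_mul,
            Real.norm_eq_abs, abs_of_nonneg (hind0 ω)]
          split_ifs with h0
          · rw [abs_of_nonneg h0]; ring
          · rw [abs_of_neg (not_le.1 h0)]; ring
        · simp [hh, Set.indicator, hx]
      rw [e2, ← e]
      refine (le_abs_self _).trans ((abs_integral_le_integral_abs).trans ?_)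
      refine integral_mono_of_nonneg (Filter.Eventually.of_forall fun ω => abs_nonneg _) hZ.abs
        (Filter.Eventually.of_forall fun ω => ?_)
      simp only [abs_mul]
      have h1 := hindb ω
      have h2 := hhb (X ω)
      calc |ind A ω| * |Z ω| * |h (X ω)| ≤ 1 * |Z ω| * 1 := by gcongr
        _ = _ := by ring
  refine (aux_K P X hX _ _ hZi hint H).trans ?_
  exact condExp_mul_of_stronglyMeasurable_right
    (hg.comp (comap_measurable X)).stronglyMeasurable hint hindi

theorem aux_univ [MeasurableSpace Ω] [m𝓧 : MeasurableSpace 𝓧]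
    (P : Measure Ω) [IsProbabilityMeasure P]
    (X : Ω → 𝓧) (hX : Measurable X)
    (Z : Ω → ℝ) (hZ : Integrable Z P) (g : 𝓧 → ℝ) (H : IsCondMeanGiven P X Set.univ Z g) :
    P[Z | m𝓧.comap X] =ᵐ[P] fun ω => g (X ω) := by
  have h := aux_L P X hX _ MeasurableSet.univ Z hZ g H
  have h1 : (ind (Set.univ : Set Ω)) = fun _ => (1 : ℝ) := by ext; simp [ind]
  rw [h1, condExp_const hX.comap_le] at h
  simpa using h

theorem aux_path [MeasurableSpace Ω] [m𝓧 : MeasurableSpace 𝓧]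
    (P : Measure Ω) [IsProbabilityMeasure P]
    (X : Ω → 𝓧) (hX : Measurable X) (D1 D2 : Ω → ℝ)
    (Y0p Y2p : ℝ × ℝ → Ω → ℝ) (e : ℝ × ℝ) (hA : MeasurableSet (evD D1 D2 e))
    (h0e : Integrable (Y0p e) P) (h2e : Integrable (Y2p e) P)
    (h00 : Integrable (Y0p (0, 0)) P) (h20 : Integrable (Y2p (0, 0)) P)
    (hD : DID P X D1 D2 Y0p Y2p e) (g : 𝓧 → ℝ)
    (hg : IsCondMeanGiven P X (evD D1 D2 e) (fun ω => Y2p e ω - Y2p (0, 0) ω) g) :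
    ∀ᵐ ω ∂P,
      (P[fun ω => ind (evD D1 D2 e) ω * (Y2p (0, 0) ω - Y0p (0, 0) ω) | m𝓧.comap X]) ω
        = (P[ind (evD D1 D2 e) | m𝓧.comap X]) ω *
          (P[fun ω => Y2p (0, 0) ω - Y0p (0, 0) ω | m𝓧.comap X]) ω ∧
      (P[fun ω => ind (evD D1 D2 e) ω * (Y2p e ω - Y0p e ω) | m𝓧.comap X]) ω
        = (P[ind (evD D1 D2 e) | m𝓧.comap X]) ω * (g (X ω) +
          (P[fun ω => Y2p (0, 0) ω - Y0p (0, 0) ω | m𝓧.comap X]) ω) := by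
  obtain ⟨hna, tr, ht1, ht2⟩ := hD
  set A := evD D1 D2 e
  have a1 := aux_univ P X hX (fun ω => Y2p (0, 0) ω - Y0p (0, 0) ω) (h20.sub h00) tr ht1
  have a2 := aux_L P X hX A hA _ (h20.sub h00) tr ht2
  have a3 := aux_L P X hX A hA _ (h2e.sub h20) g hg
  have a4 := aux_K P X hX _ _ (aux_ind_int P A hA _ h0e) (aux_ind_int P A hA _ h00) hna
  have i1 := aux_ind_int P A hA _ (h2e.sub h20)
  have i2 := aux_ind_int P A hA _ (h20.sub h00)
  have i3 := aux_ind_int P A hA _ h0e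
  have i4 := aux_ind_int P A hA _ h00
  have hdec : (fun ω => ind A ω * (Y2p e ω - Y0p e ω)) =
      ((fun ω => ind A ω * (Y2p e - Y2p (0, 0)) ω) + fun ω => ind A ω * (Y2p (0, 0) - Y0p (0, 0)) ω)
      + ((fun ω => ind A ω * Y0p (0, 0) ω) - fun ω => ind A ω * Y0p e ω) := by
    ext ω
    simp only [Pi.add_apply, Pi.sub_apply]
    ring
  rw [hdec]
  have b1 := condExp_add (i1.add i2) (i4.sub i3) (m𝓧.comap X)
  have b2 := condExp_add i1 i2 (m𝓧.comap X)
  have b3 := condExp_sub i4 i3 (m𝓧.comap X)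
  filter_upwards [a1, a2, a3, a4, b1, b2, b3] with ω a1 a2 a3 a4 b1 b2 b3
  simp only [Pi.add_apply, Pi.sub_apply] at *
  refine ⟨by rw [a2, a1], ?_⟩
  rw [b1, b2, b3, a4, a3, a2, a1]
  ring

/-- The conditional decomposition underlying Proposition 1. -/
theorem statement_15
    [MeasurableSpace Ω] [m𝓧 : MeasurableSpace 𝓧]
    (P : Measure Ω) [IsProbabilityMeasure P]
    (X : Ω → 𝓧) (hX : Measurable X)
    (Y0 Y2 D1 D2 : Ω → ℝ)
    (hY0 : Measurable Y0) (hY2 : Measurable Y2)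
    (hD1 : Measurable D1) (hD2 : Measurable D2)
    (hY0i : Integrable Y0 P) (hY2i : Integrable Y2 P)
    (hD1v : ∀ ω, D1 ω = 0 ∨ D1 ω = 1) (hD2v : ∀ ω, D2 ω = 0 ∨ D2 ω = 1)
    (Y0p Y2p : ℝ × ℝ → Ω → ℝ)
    (hY0p : ∀ e ∈ allPaths, Measurable (Y0p e) ∧ Integrable (Y0p e) P)
    (hY2p : ∀ e ∈ allPaths, Measurable (Y2p e) ∧ Integrable (Y2p e) P)
    (hcons0 : ∀ ω, Y0 ω = Y0p (D1 ω, D2 ω) ω)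
    (hcons2 : ∀ ω, Y2 ω = Y2p (D1 ω, D2 ω) ω)
    (hDID : ∀ d ∈ threePaths, DID P X D1 D2 Y0p Y2p d)
    (pP : ℝ × ℝ → 𝓧 → ℝ)
    (hpP : ∀ e ∈ allPaths, IsCondMeanGiven P X Set.univ (ind (evD D1 D2 e)) (pP e))
    (hpPpos : ∀ e ∈ allPaths, ∀ᵐ ω ∂P, 0 < pP e (X ω))
    (m1 m0 : 𝓧 → ℝ)
    (hm1 : IsCondMeanGiven P X (evD2 D2 1) (fun ω => Y2 ω - Y0 ω) m1)
    (hm0 : IsCondMeanGiven P X (evD2 D2 0) (fun ω => Y2 ω - Y0 ω) m0)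
    (g11 g01 g10 : 𝓧 → ℝ)
    (hg11 : IsCondMeanGiven P X (evD D1 D2 (1, 1))
        (fun ω => Y2p (1, 1) ω - Y2p (0, 0) ω) g11)
    (hg01 : IsCondMeanGiven P X (evD D1 D2 (0, 1))
        (fun ω => Y2p (0, 1) ω - Y2p (0, 0) ω) g01)
    (hg10 : IsCondMeanGiven P X (evD D1 D2 (1, 0))
        (fun ω => Y2p (1, 0) ω - Y2p (0, 0) ω) g10)
    (p11 p01 p10 : 𝓧 → ℝ)
    (hp11 : IsCondMeanGiven P X (evD2 D2 1) (ind {ω | D1 ω = 1}) p11)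
    (hp01 : IsCondMeanGiven P X (evD2 D2 1) (ind {ω | D1 ω = 0}) p01)
    (hp10 : IsCondMeanGiven P X (evD2 D2 0) (ind {ω | D1 ω = 1}) p10) :
    ∀ᵐ ω ∂P,
      m1 (X ω) - m0 (X ω)
        = g11 (X ω) * p11 (X ω) + g01 (X ω) * p01 (X ω) - g10 (X ω) * p10 (X ω) := by
  have q : ∀ a b : ℝ, MeasurableSet (evD D1 D2 (a, b)) := fun a b =>
    (hD1 (measurableSet_singleton a)).inter (hD2 (measurableSet_singleton b))
  have q2 : ∀ b : ℝ, MeasurableSet (evD2 D2 b) := fun b => hD2 (measurableSet_singleton b)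
  have q1 : ∀ b : ℝ, MeasurableSet {ω | D1 ω = b} := fun b => hD1 (measurableSet_singleton b)
  have ii : ∀ A : Set Ω, MeasurableSet A → Integrable (ind A) P := fun A hA =>
    (integrable_const (1 : ℝ)).indicator hA
  have m00 : ((0, 0) : ℝ × ℝ) ∈ allPaths := by simp [allPaths]
  have m01 : ((0, 1) : ℝ × ℝ) ∈ allPaths := by simp [allPaths]
  have m10 : ((1, 0) : ℝ × ℝ) ∈ allPaths := by simp [allPaths]
  have m11 : ((1, 1) : ℝ × ℝ) ∈ allPaths := by simp [allPaths]
  have pth := fun (e : ℝ × ℝ) (he : e ∈ allPaths) (ht : e ∈ threePaths) =>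
    aux_path P X hX D1 D2 Y0p Y2p e (q e.1 e.2) (hY0p e he).2 (hY2p e he).2
      (hY0p _ m00).2 (hY2p _ m00).2 (hDID e ht)
  have c11 := pth _ m11 (by simp [threePaths]) g11 hg11
  have c01 := pth _ m01 (by simp [threePaths]) g01 hg01
  have c10 := pth _ m10 (by simp [threePaths]) g10 hg10
  have pos : ∀ e ∈ allPaths, ∀ᵐ ω ∂P, 0 < (P[ind (evD D1 D2 e) | m𝓧.comap X]) ω := by
    intro e he
    filter_upwards [hpPpos e he, aux_univ P X hX _ (ii _ (q e.1 e.2)) _ (hpP e he)] with ω h1 h2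
    rwa [h2]
  have p00 := pos _ m00
  have p01' := pos _ m01
  have p10' := pos _ m10
  have p11' := pos _ m11
  have iΔ : Integrable (fun ω => Y2 ω - Y0 ω) P := hY2i.sub hY0i
  have l1 := aux_L P X hX _ (q2 1) _ iΔ m1 hm1
  have l0 := aux_L P X hX _ (q2 0) _ iΔ m0 hm0
  have l11 := aux_L P X hX _ (q2 1) _ (ii _ (q1 1)) p11 hp11
  have l01 := aux_L P X hX _ (q2 1) _ (ii _ (q1 0)) p01 hp01
  have l10 := aux_L P X hX _ (q2 0) _ (ii _ (q1 1)) p10 hp10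
  have iZ : ∀ a b : ℝ, ∀ e ∈ allPaths, Integrable
      (fun ω => ind (evD D1 D2 (a, b)) ω * (Y2p e ω - Y0p e ω)) P := fun a b e he =>
    aux_ind_int P _ (q a b) _ ((hY2p e he).2.sub (hY0p e he).2)
  have eqi : ∀ a b : ℝ, (fun ω => ind (evD2 D2 b) ω * ind {ω | D1 ω = a} ω)
      = ind (evD D1 D2 (a, b)) := by
    intro a b
    ext ω
    by_cases h1 : D1 ω = a <;> by_cases h2 : D2 ω = b <;> simp [ind, evD, evD2, h1, h2]
  rw [eqi] at l11 l01 l10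
  have eqs : ∀ b : ℝ, ind (evD2 D2 b) = ind (evD D1 D2 (1, b)) + ind (evD D1 D2 (0, b)) := by
    intro b
    ext ω
    rcases hD1v ω with h1 | h1 <;> by_cases h2 : D2 ω = b <;> simp [ind, evD, evD2, h1, h2]
  have eqY : ∀ b : ℝ, (fun ω => ind (evD2 D2 b) ω * (Y2 ω - Y0 ω)) =
      (fun ω => ind (evD D1 D2 (1, b)) ω * (Y2p (1, b) ω - Y0p (1, b) ω)) +
      fun ω => ind (evD D1 D2 (0, b)) ω * (Y2p (0, b) ω - Y0p (0, b) ω) := by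
    intro b
    ext ω
    rw [Pi.add_apply, hcons0, hcons2]
    rcases hD1v ω with h1 | h1 <;> by_cases h2 : D2 ω = b <;> simp [ind, evD, evD2, h1, h2]
  rw [eqY] at l1 l0
  have s1 := condExp_add (ii _ (q 1 1)) (ii _ (q 0 1)) (m𝓧.comap X)
  have s0 := condExp_add (ii _ (q 1 0)) (ii _ (q 0 0)) (m𝓧.comap X)
  rw [eqs] at l1 l0 l11 l01 l10
  have t1 := condExp_add (iZ 1 1 _ m11) (iZ 0 1 _ m01) (m𝓧.comap X)
  have t0 := condExp_add (iZ 1 0 _ m10) (iZ 0 0 _ m00) (m𝓧.comap X)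
  have one : (fun _ : Ω => (1 : ℝ)) = (ind (evD D1 D2 (1, 1)) + ind (evD D1 D2 (0, 1))) +
      (ind (evD D1 D2 (1, 0)) + ind (evD D1 D2 (0, 0))) := by
    ext ω
    rcases hD1v ω with h1 | h1 <;> rcases hD2v ω with h2 | h2 <;> simp [ind, evD, h1, h2]
  have u := condExp_add ((ii _ (q 1 1)).add (ii _ (q 0 1))) ((ii _ (q 1 0)).add (ii _ (q 0 0)))
    (m𝓧.comap X)
  rw [← one, condExp_const hX.comap_le] at u
  have zz : (fun ω => Y2p (0, 0) ω - Y0p (0, 0) ω) =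
      ((fun ω => ind (evD D1 D2 (1, 1)) ω * (Y2p (0, 0) ω - Y0p (0, 0) ω)) +
        fun ω => ind (evD D1 D2 (0, 1)) ω * (Y2p (0, 0) ω - Y0p (0, 0) ω)) +
      ((fun ω => ind (evD D1 D2 (1, 0)) ω * (Y2p (0, 0) ω - Y0p (0, 0) ω)) +
        fun ω => ind (evD D1 D2 (0, 0)) ω * (Y2p (0, 0) ω - Y0p (0, 0) ω)) := by
    ext ω
    rcases hD1v ω with h1 | h1 <;> rcases hD2v ω with h2 | h2 <;> simp [ind, evD, h1, h2]
  have v := condExp_add ((iZ 1 1 _ m00).add (iZ 0 1 _ m00)) ((iZ 1 0 _ m00).add (iZ 0 0 _ m00))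
    (m𝓧.comap X)
  rw [← zz] at v
  have v1 := condExp_add (iZ 1 1 _ m00) (iZ 0 1 _ m00) (m𝓧.comap X)
  have v0 := condExp_add (iZ 1 0 _ m00) (iZ 0 0 _ m00) (m𝓧.comap X)
  filter_upwards [c11, c01, c10, p00, p01', p10', p11', l1, l0, l11, l01, l10, s1, s0, t1, t0,
    u, v, v1, v0] with ω c11 c01 c10 p00 p01' p10' p11' l1 l0 l11 l01 l10 s1 s0 t1 t0 u v v1 v0
  obtain ⟨c11, d11⟩ := c11
  obtain ⟨c01, d01⟩ := c01
  obtain ⟨c10, d10⟩ := c10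
  simp only [Pi.add_apply] at *
  rw [s1] at l1 l11 l01 u
  rw [s0] at l0 l10 u
  rw [t1, d11, d01] at l1
  rw [t0, d10] at l0
  rw [v1, v0, c11, c01, c10] at v
  clear t1 t0 s1 s0 v1 v0 c11 c01 c10 d11 d01 d10
  generalize (P[fun ω => ind (evD D1 D2 (0, 0)) ω * (Y2p (0, 0) ω - Y0p (0, 0) ω) |
    m𝓧.comap X]) ω = W at *
  generalize (P[fun ω => Y2p (0, 0) ω - Y0p (0, 0) ω | m𝓧.comap X]) ω = T at *
  generalize (P[ind (evD D1 D2 (0, 0)) | m𝓧.comap X]) ω = q00 at *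
  generalize (P[ind (evD D1 D2 (0, 1)) | m𝓧.comap X]) ω = q01 at *
  generalize (P[ind (evD D1 D2 (1, 0)) | m𝓧.comap X]) ω = q10 at *
  generalize (P[ind (evD D1 D2 (1, 1)) | m𝓧.comap X]) ω = q11 at *
  have hW : W = q00 * T := by linear_combination (-1 : ℝ) * v + T * u
  have e1 : m1 (X ω) = g11 (X ω) * p11 (X ω) + g01 (X ω) * p01 (X ω) + T := by
    have : q11 + q01 ≠ 0 := by positivity
    apply mul_left_cancel₀ this
    linear_combination (-1 : ℝ) * l1 + g11 (X ω) * l11 + g01 (X ω) * l01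
  have e0 : m0 (X ω) = g10 (X ω) * p10 (X ω) + T := by
    have : q10 + q00 ≠ 0 := by positivity
    apply mul_left_cancel₀ this
    linear_combination (-1 : ℝ) * l0 + g10 (X ω) * l10 + hW
  rw [e1, e0]
  ring

end DIDMissing
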